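/- Let R > 0 and define f_Y(y) = (1/2)(φ₁(y − R) + φ₁(y + R)), the output density for the scalar Gaussian channel with input uniform on {−R, R}. Then ∫_ℝ (φ₁(y − R) − φ₁(y)) log(1/f_Y(y)) dy = −R ∫_ℝ (Q(w − R) − Q(w)) tanh(R w) dw + R²/2. -/

import Mathlib

open MeasureTheory Real

/-- The standard Gaussian density `φ₁(t) = (2π)^{-1/2} e^{-t²/2}` on `ℝ`. -/
noncomputable def gaussDensity1 (t : ℝ) : ℝ :=
  (2 * Real.pi) ^ (-(1 : ℝ) / 2) * Real.exp (-t ^ 2 / 2)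

/-- The standard Gaussian tail function `Q(x) = ∫_x^∞ (2π)^{-1/2} e^{-t²/2} dt`. -/
noncomputable def gaussQ (x : ℝ) : ℝ :=
  ∫ t in Set.Ioi x, (2 * Real.pi) ^ (-(1 : ℝ) / 2) * Real.exp (-t ^ 2 / 2)


lemma gd_cont : Continuous gaussDensity1 := by
  unfold gaussDensity1; fun_prop

lemma gd_pos (t : ℝ) : 0 < gaussDensity1 t := by
  unfold gaussDensity1; positivity

lemma integrable_of_bd (f : ℝ → ℝ) (hf : Continuous f) (A : ℝ)
    (h : ∀ y, |f y| ≤ A * ((1 + y ^ 2) * Real.exp (-(1/4) * y ^ 2))) : Integrable f := by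
  have h1 : Integrable fun x : ℝ => Real.exp (-(1/4) * x ^ 2) :=
    integrable_exp_neg_mul_sq (by norm_num)
  have h2 : Integrable fun x : ℝ => x ^ 2 * Real.exp (-(1/4) * x ^ 2) := by
    have := integrable_rpow_mul_exp_neg_mul_sq (b := 1/4) (by norm_num) (s := 2) (by norm_num)
    simpa using this
  have h3 : Integrable fun y : ℝ => A * ((1 + y ^ 2) * Real.exp (-(1/4) * y ^ 2)) := by
    refine ((h1.add h2).const_mul A).congr (Filter.Eventually.of_forall fun y => ?_)
    simp only [Pi.add_apply]; ring
  exact h3.mono' hf.aestronglyMeasurable (Filter.Eventually.of_forall fun y => h y)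

/-- the uniform constant -/
noncomputable def KK (R : ℝ) : ℝ := (2 * Real.pi) ^ (-(1 : ℝ) / 2) * Real.exp (R ^ 2 / 2)

lemma KK_pos (R : ℝ) : 0 < KK R := by unfold KK; positivity

lemma gd_bd (R s y : ℝ) (hs : s ^ 2 ≤ R ^ 2) :
    gaussDensity1 (y - s) ≤ KK R * Real.exp (-(1/4) * y ^ 2) := by
  unfold gaussDensity1 KK
  rw [mul_assoc, ← Real.exp_add]
  gcongr
  nlinarith [sq_nonneg (y - 2 * s)]

lemma gd_integrable : Integrable gaussDensity1 := by
  refine integrable_of_bd _ gd_cont (KK 0) fun y => ?_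
  rw [abs_of_pos (gd_pos y)]
  have := gd_bd 0 0 y le_rfl
  rw [sub_zero] at this
  refine this.trans ?_
  have := KK_pos 0
  gcongr
  have := Real.exp_pos (-(1/4) * y ^ 2)
  nlinarith [sq_nonneg y]

lemma gd_int : ∫ y, gaussDensity1 y = 1 := by
  unfold gaussDensity1
  rw [integral_const_mul]
  have := integral_gaussian (1/2)
  have e : (fun a : ℝ => Real.exp (-a ^ 2 / 2)) = fun a => Real.exp (-(1/2) * a ^ 2) := by
    funext a; congr 1; ring
  rw [e, this, show π / (1/2) = 2 * π by ring, Real.sqrt_eq_rpow, ← Real.rpow_add (by positivity)]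
  norm_num

lemma gd_int_mul : ∫ y, y * gaussDensity1 y = 0 := by
  have h := integral_neg_eq_self (fun y => y * gaussDensity1 y) (volume : Measure ℝ)
  have e : (fun y : ℝ => -y * gaussDensity1 (-y)) = fun y => -(y * gaussDensity1 y) := by
    funext y; simp [gaussDensity1]
  rw [e, integral_neg] at h
  linarith

lemma Q_sub (R w : ℝ) :
    gaussQ (w - R) - gaussQ w = ∫ t in (w - R)..w, gaussDensity1 t :=
  intervalIntegral.integral_Ioi_sub_Ioi' gd_integrable.integrableOn gd_integrable.integrableOn

lemma Q_deriv (R w : ℝ) : HasDerivAt (fun w => gaussQ (w - R) - gaussQ w)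
    (gaussDensity1 w - gaussDensity1 (w - R)) w := by
  have hi : ∀ a b, IntervalIntegrable gaussDensity1 volume a b := fun a b =>
    gd_cont.intervalIntegrable a b
  have e : (fun w => gaussQ (w - R) - gaussQ w) = fun w =>
      (∫ t in (0:ℝ)..w, gaussDensity1 t) - ∫ t in (0:ℝ)..(w - R), gaussDensity1 t := by
    funext w
    rw [Q_sub, intervalIntegral.integral_interval_sub_left (hi _ _) (hi _ _)]
  rw [e]
  have hF : ∀ x, HasDerivAt (fun w => ∫ t in (0:ℝ)..w, gaussDensity1 t) (gaussDensity1 x) x :=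
    fun x => intervalIntegral.integral_hasDerivAt_right (hi _ _)
      gd_cont.stronglyMeasurable.stronglyMeasurableAtFilter gd_cont.continuousAt
  exact (hF w).sub ((hF (w - R)).comp_sub_const w R)

lemma Q_bd (R : ℝ) (hR : 0 < R) (w : ℝ) :
    |gaussQ (w - R) - gaussQ w| ≤ R * KK R * Real.exp (-(1/4) * w ^ 2) := by
  rw [Q_sub]
  have := intervalIntegral.norm_integral_le_of_norm_le_const (a := w - R) (b := w)
    (f := gaussDensity1) (C := KK R * Real.exp (-(1/4) * w ^ 2)) (by
      intro x hx
      rw [Set.uIoc_of_le (by linarith)] at hx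
      rw [Real.norm_eq_abs, abs_of_pos (gd_pos x)]
      have := gd_bd R (w - x) w (by nlinarith [hx.1, hx.2])
      simpa using this)
  rw [Real.norm_eq_abs, sub_sub_cancel, abs_of_pos hR] at this
  linarith

lemma lc_bd (x : ℝ) : |Real.log (Real.cosh x)| ≤ |x| := by
  rw [abs_of_nonneg (Real.log_nonneg (Real.one_le_cosh x)), Real.log_le_iff_le_exp (Real.cosh_pos x),
    ← Real.cosh_abs, Real.cosh_eq]
  have : Real.exp (-|x|) ≤ Real.exp |x| := by
    gcongr; linarith [abs_nonneg x]
  linarith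

lemma lc_deriv (R x : ℝ) : HasDerivAt (fun x => Real.log (Real.cosh (R * x)))
    (R * Real.tanh (R * x)) x := by
  have h1 : HasDerivAt (fun x => R * x) R x := by simpa using (hasDerivAt_id x).const_mul R
  have := (h1.cosh).log (Real.cosh_pos _).ne'
  convert this using 1
  rw [Real.tanh_eq_sinh_div_cosh]; ring

lemma lc_cont (R : ℝ) : Continuous (fun x => Real.log (Real.cosh (R * x))) :=
  continuous_iff_continuousAt.2 fun x => (lc_deriv R x).continuousAt

lemma tanh_cont (R : ℝ) : Continuous (fun x => Real.tanh (R * x)) := by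
  simp only [Real.tanh_eq_sinh_div_cosh]
  exact Continuous.div (by fun_prop) (by fun_prop) fun x => (Real.cosh_pos _).ne'

lemma abs_le_sq (y : ℝ) : |y| ≤ 1 + y ^ 2 := by
  rw [abs_le]; constructor <;> nlinarith [sq_nonneg (y - 1), sq_nonneg (y + 1)]

lemma integrable_prod_bd (f g : ℝ → ℝ) (hf : Continuous f) (hg : Continuous g) (A B : ℝ)
    (hA : ∀ y, |f y| ≤ A * Real.exp (-(1/4) * y ^ 2)) (hB : ∀ y, |g y| ≤ B * (1 + y ^ 2)) :
    Integrable (fun y => f y * g y) := by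
  refine integrable_of_bd _ (hf.mul hg) (A * B) fun y => ?_
  rw [abs_mul]
  calc |f y| * |g y| ≤ (A * Real.exp (-(1/4) * y ^ 2)) * (B * (1 + y ^ 2)) :=
        mul_le_mul (hA y) (hB y) (abs_nonneg _) ((abs_nonneg _).trans (hA y))
    _ = _ := by ring

lemma parts (R : ℝ) (hR : 0 < R) :
    Integrable (fun y => (gaussDensity1 (y - R) - gaussDensity1 y) * Real.log (Real.cosh (R * y))) ∧
    ∫ y, (gaussDensity1 (y - R) - gaussDensity1 y) * Real.log (Real.cosh (R * y)) =
      R * ∫ w, (gaussQ (w - R) - gaussQ w) * Real.tanh (R * w) := by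
  have cG : Continuous fun w => gaussQ (w - R) - gaussQ w :=
    continuous_iff_continuousAt.2 fun x => (Q_deriv R x).continuousAt
  have hlc : ∀ y, |Real.log (Real.cosh (R * y))| ≤ R * (1 + y ^ 2) := fun y => by
    refine (lc_bd _).trans ?_
    rw [abs_mul, abs_of_pos hR]
    gcongr
    exact abs_le_sq y
  have hd : ∀ y, |gaussDensity1 y - gaussDensity1 (y - R)| ≤
      KK R * Real.exp (-(1/4) * y ^ 2) := fun y => by
    have h1 := gd_bd R 0 y (by nlinarith [sq_nonneg R])
    have h2 := gd_bd R R y le_rfl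
    rw [sub_zero] at h1
    have h3 := gd_pos y
    have h4 := gd_pos (y - R)
    rw [abs_le]; constructor <;> linarith
  have cd : Continuous fun y => gaussDensity1 y - gaussDensity1 (y - R) :=
    gd_cont.sub (gd_cont.comp (by fun_prop))
  have i1 := integrable_prod_bd _ (fun y => R * Real.tanh (R * y)) cG
    (continuous_const.mul (tanh_cont R)) _ R (Q_bd R hR) fun y => by
      rw [abs_mul, abs_of_pos hR]
      gcongr
      have := abs_tanh_lt_one (R * y)
      nlinarith [sq_nonneg y]
  have i2 := integrable_prod_bd _ _ cd (lc_cont R) _ _ hd hlc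
  have i3 := integrable_prod_bd _ _ cG (lc_cont R) _ _ (Q_bd R hR) hlc
  have key := integral_mul_deriv_eq_deriv_mul_of_integrable
    (fun x _ => Q_deriv R x) (fun x _ => lc_deriv R x) i1 i2 i3
  have e : (fun y => (gaussDensity1 (y - R) - gaussDensity1 y) * Real.log (Real.cosh (R * y))) =
      fun y => -((gaussDensity1 y - gaussDensity1 (y - R)) * Real.log (Real.cosh (R * y))) := by
    funext y; ring
  rw [e]
  refine ⟨i2.neg, ?_⟩
  rw [integral_neg, ← key, ← integral_const_mul]
  congr 1; funext y; ring

lemma quad (R c : ℝ) :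
    Integrable (fun y => (gaussDensity1 (y - R) - gaussDensity1 y) * (c + y ^ 2 / 2)) ∧
    ∫ y, (gaussDensity1 (y - R) - gaussDensity1 y) * (c + y ^ 2 / 2) = R ^ 2 / 2 := by
  have hq : ∀ y : ℝ, |c + y ^ 2 / 2| ≤ (|c| + 1) * (1 + y ^ 2) := fun y => by
    refine (abs_add_le _ _).trans ?_
    rw [abs_of_nonneg (by positivity : 0 ≤ y ^ 2 / 2)]
    nlinarith [sq_nonneg y, mul_nonneg (abs_nonneg c) (sq_nonneg y)]
  have bd : ∀ s, s ^ 2 ≤ R ^ 2 → ∀ y, |gaussDensity1 (y - s)| ≤ KK R * Real.exp (-(1/4) * y ^ 2) :=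
    fun s hs y => by rw [abs_of_pos (gd_pos _)]; exact gd_bd R s y hs
  have i1 := integrable_prod_bd (fun y => gaussDensity1 (y - R)) (fun y => c + y ^ 2 / 2)
    (gd_cont.comp (by fun_prop)) (by fun_prop) _ _ (bd R le_rfl) hq
  have i2 := integrable_prod_bd (fun y => gaussDensity1 y) (fun y => c + y ^ 2 / 2)
    gd_cont (by fun_prop) _ _ (fun y => by simpa using bd 0 (by nlinarith [sq_nonneg R]) y) hq
  have i3 := integrable_prod_bd (fun y => gaussDensity1 y) (fun y => y)
    gd_cont (by fun_prop) _ 1 (fun y => by simpa using bd 0 (by nlinarith [sq_nonneg R]) y)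
    (fun y => by simpa using abs_le_sq y)
  have i4 : Integrable (fun y => gaussDensity1 y * (c + (y + R) ^ 2 / 2)) := by
    simpa using i1.comp_add_right R
  simp only [sub_mul]
  refine ⟨i1.sub i2, ?_⟩
  rw [integral_sub i1 i2]
  have t := integral_sub_right_eq_self (μ := (volume : Measure ℝ))
    (fun y => gaussDensity1 y * (c + (y + R) ^ 2 / 2)) R
  simp only [sub_add_cancel] at t
  rw [t, ← integral_sub i4 i2]
  have e : (fun y => gaussDensity1 y * (c + (y + R) ^ 2 / 2) - gaussDensity1 y * (c + y ^ 2 / 2)) =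
      fun y => R * (gaussDensity1 y * y) + R ^ 2 / 2 * gaussDensity1 y := by
    funext y; ring
  rw [e, integral_add (i3.const_mul R) (gd_integrable.const_mul _), integral_const_mul,
    integral_const_mul, gd_int]
  have := gd_int_mul
  simp only [mul_comm] at this ⊢
  rw [this]; ring

lemma log_fY (R y : ℝ) :
    Real.log (1 / ((1 / 2) * (gaussDensity1 (y - R) + gaussDensity1 (y + R)))) =
      ((-Real.log ((2 * Real.pi) ^ (-(1 : ℝ) / 2)) + R ^ 2 / 2) + y ^ 2 / 2)
        - Real.log (Real.cosh (R * y)) := by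
  have e : (1 / 2) * (gaussDensity1 (y - R) + gaussDensity1 (y + R)) =
      (2 * Real.pi) ^ (-(1 : ℝ) / 2) * Real.exp (-(y ^ 2 / 2) - R ^ 2 / 2) * Real.cosh (R * y) := by
    unfold gaussDensity1
    rw [Real.cosh_eq,
      show -(y - R) ^ 2 / 2 = (-(y ^ 2 / 2) - R ^ 2 / 2) + R * y by ring,
      show -(y + R) ^ 2 / 2 = (-(y ^ 2 / 2) - R ^ 2 / 2) + -(R * y) by ring,
      Real.exp_add, Real.exp_add (-(y ^ 2 / 2) - R ^ 2 / 2)]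
    ring
  have hc := Real.cosh_pos (R * y)
  have hp : 0 < (2 * Real.pi) ^ (-(1 : ℝ) / 2) := by positivity
  rw [e, one_div, Real.log_inv, Real.log_mul (by positivity) hc.ne',
    Real.log_mul hp.ne' (Real.exp_pos _).ne', Real.log_exp]
  ring

/-- For `R > 0` and `f_Y(y) = (1/2)(φ₁(y-R) + φ₁(y+R))` (the output
density for the scalar Gaussian channel with input uniform on `{-R, R}`):
`∫_ℝ (φ₁(y-R) - φ₁(y)) log(1/f_Y(y)) dy
  = -R ∫_ℝ (Q(w-R) - Q(w)) tanh(Rw) dw + R²/2`. -/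
theorem stmt19 (R : ℝ) (hR : 0 < R)
    (fY : ℝ → ℝ) (hfY : ∀ y, fY y = (1 / 2) * (gaussDensity1 (y - R) + gaussDensity1 (y + R))) :
    ∫ y : ℝ, (gaussDensity1 (y - R) - gaussDensity1 y) * Real.log (1 / fY y) =
      -R * (∫ w : ℝ, (gaussQ (w - R) - gaussQ w) * Real.tanh (R * w)) + R ^ 2 / 2 := by
  obtain ⟨i1, h1⟩ := parts R hR
  obtain ⟨i2, h2⟩ := quad R (-Real.log ((2 * Real.pi) ^ (-(1 : ℝ) / 2)) + R ^ 2 / 2)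
  simp only [hfY, log_fY, mul_sub (gaussDensity1 _ - gaussDensity1 _)]
  rw [integral_sub i2 i1, h1, h2]
  ring
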